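/- Let k ≥ 2 be an integer and j ∈ {1,…,k−1}, and let ω = ω(n) be any function tending to infinity as n → ∞. Then with high probability, ((j+1)·log n + log log n − ω)·(k−j)!/((k−j+1)·n^{k−j}) < p_{M_j} < ((j+1)·log n + log log n + ω)·(k−j)!/((k−j+1)·n^{k−j}). -/

import Mathlib

open MeasureTheory Filter

attribute [local instance] Classical.propDecidable

namespace RSC

variable {V : Type*}

/-- `A` is an `i`-dimensional simplex of the complex `G`. -/
def IsSimplex (G : Set (Finset V)) (i : ℕ) (A : Finset V) : Prop :=
  A ∈ G ∧ A.card = i + 1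

/-- A `k`-dimensional simplicial complex on vertex set `V`. -/
structure IsKComplex (G : Set (Finset V)) (k : ℕ) : Prop where
  down : ∀ A ∈ G, ∀ B, B ⊆ A → B.Nonempty → B ∈ G
  singletons : ∀ v : V, ({v} : Finset V) ∈ G
  dim : ∀ A ∈ G, A.card ≤ k + 1

/-- `i`-cochains with `F₂`-coefficients. -/
abbrev Cochain (G : Set (Finset V)) (i : ℕ) : Type _ :=
  {A : Finset V // IsSimplex G i A} → ZMod 2

/-- The coboundary map `δ^i : C^i(G) → C^{i+1}(G)`. -/
noncomputable def coboundary (G : Set (Finset V)) (i : ℕ) :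
    Cochain G i →ₗ[ZMod 2] Cochain G (i + 1) where
  toFun f := fun σ => ∑ τ ∈ Finset.powersetCard (i + 1) (σ : Finset V),
      if h : IsSimplex G i τ then f ⟨τ, h⟩ else 0
  map_add' f g := by
    funext σ
    simp only [Pi.add_apply, ← Finset.sum_add_distrib]
    refine Finset.sum_congr rfl fun τ _ => ?_
    by_cases h : IsSimplex G i τ <;> simp [h]
  map_smul' c f := by
    funext σ
    simp only [Pi.smul_apply, RingHom.id_apply, Finset.smul_sum]
    refine Finset.sum_congr rfl fun τ _ => ?_
    by_cases h : IsSimplex G i τ <;> simp [h]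

/-- The submodule of `i`-cocycles. -/
noncomputable def cocycles (G : Set (Finset V)) (i : ℕ) : Submodule (ZMod 2) (Cochain G i) :=
  LinearMap.ker (coboundary G i)

/-- The submodule of `i`-coboundaries (`δ^{-1}` is the zero map). -/
noncomputable def coboundaries (G : Set (Finset V)) : (i : ℕ) → Submodule (ZMod 2) (Cochain G i)
  | 0 => ⊥
  | (i + 1) => LinearMap.range (coboundary G i)

/-- The `i`-th cohomology group `H^i(G;F₂) = ker δ^i / im δ^{i-1}`. -/
noncomputable abbrev cohomology (G : Set (Finset V)) (i : ℕ) :=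
  (cocycles G i) ⧸ ((coboundaries G i).comap (cocycles G i).subtype)

/-- `F₂`-cohomological `j`-connectedness: `H^0 ≅ F₂` and `H^i = 0` for `1 ≤ i ≤ j`. -/
def CohomConnected (G : Set (Finset V)) (j : ℕ) : Prop :=
  Nonempty (cohomology G 0 ≃ₗ[ZMod 2] ZMod 2) ∧
    ∀ i, 1 ≤ i → i ≤ j → Subsingleton (cohomology G i)

/-- The `j`-flower in `K` with centre `C`: the set of petals `C ∪ {w}`, `w ∈ K \ C`. -/
def Flower [DecidableEq V] (K C : Finset V) : Set (Finset V) :=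
  {P | ∃ w ∈ K \ C, P = insert w C}

/-- A copy of `M_j^-`: a `k`-simplex `K` together with a `(j-1)`-simplex `C ⊆ K` such that
each petal of the flower `F(K,C)` is contained in no `k`-simplex other than `K`. -/
def IsMjMinus [DecidableEq V] (G : Set (Finset V)) (k j : ℕ) (K C : Finset V) : Prop :=
  IsSimplex G k K ∧ C ∈ G ∧ C.card = j ∧ C ⊆ K ∧
    ∀ P ∈ Flower K C, ∀ K', IsSimplex G k K' → P ⊆ K' → K' = K

/-- A `j`-cycle: every `(j-1)`-simplex lies in an even number of members of `J`. -/
def IsCycle (G : Set (Finset V)) (j : ℕ) (J : Finset (Finset V)) : Prop :=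
  (∀ σ ∈ J, IsSimplex G j σ) ∧
    ∀ τ : Finset V, τ.card = j → Even (J.filter (fun σ => τ ⊆ σ)).card

/-- A copy of `M_j`. -/
def IsMj [DecidableEq V] (G : Set (Finset V)) (k j : ℕ) (K C : Finset V)
    (J : Finset (Finset V)) : Prop :=
  IsMjMinus G k j K C ∧ IsCycle G j J ∧ ∃! P : Finset V, P ∈ J ∧ P ∈ Flower K C

/-- A `j`-shell: a `(j+2)`-set all of whose `(j+1)`-subsets are `j`-simplices. -/
def IsShell (G : Set (Finset V)) (j : ℕ) (A : Finset V) : Prop :=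
  A.card = j + 2 ∧ ∀ τ ⊆ A, τ.card = j + 1 → τ ∈ G

/-- A copy of `M_j^*`. -/
def IsMjStar [DecidableEq V] (G : Set (Finset V)) (k j : ℕ) (K C : Finset V) (w a : V) : Prop :=
  IsMjMinus G k j K C ∧ w ∈ K \ C ∧ a ∉ K ∧ IsShell G j (insert a (insert w C))

/-- The support of a cochain. -/
def cochainSupport {G : Set (Finset V)} {i : ℕ} (f : Cochain G i) : Set (Finset V) :=
  {A | ∃ h : IsSimplex G i A, f ⟨A, h⟩ = 1}

/-- A cochain arising from a copy of `M_j^-`: its support is the flower `F(K,C)`. -/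
def ArisesFrom [DecidableEq V] (G : Set (Finset V)) (k j : ℕ) (f : Cochain G j)
    (K C : Finset V) : Prop :=
  IsMjMinus G k j K C ∧ cochainSupport f = Flower K C

/-- A `j`-cocycle generated by copies of `M_j^-`: it differs by a `j`-coboundary from a sum
of `j`-cocycles arising from copies of `M_j^-`. -/
def GeneratedByMjMinus [DecidableEq V] (G : Set (Finset V)) (k j : ℕ) (f : Cochain G j) : Prop :=
  ∃ (m : ℕ) (fs : Fin m → Cochain G j),
    (∀ i, ∃ K C, ArisesFrom G k j (fs i) K C) ∧
      f - (∑ i, fs i) ∈ coboundaries G j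

/-- Membership in `N_G`: a `j`-cocycle not generated by copies of `M_j^-`. -/
def InNG [DecidableEq V] (G : Set (Finset V)) (k j : ℕ) (f : Cochain G j) : Prop :=
  f ∈ cocycles G j ∧ ¬ GeneratedByMjMinus G k j f

/-- Traversability: the transitive closure of "lying in a common `k`-simplex" is `S × S`. -/
def Traversable (G : Set (Finset V)) (k : ℕ) (S : Set (Finset V)) : Prop :=
  ∀ σ₁ ∈ S, ∀ σ₂ ∈ S,
    Relation.TransGen
      (fun a b => a ∈ S ∧ b ∈ S ∧ ∃ K, IsSimplex G k K ∧ a ⊆ K ∧ b ⊆ K) σ₁ σ₂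

/-- A local obstacle: a `k`-simplex containing at least `k-j+1` many `j`-simplices,
each lying in no other `k`-simplex. -/
def IsLocalObstacle (G : Set (Finset V)) (k j : ℕ) (K : Finset V) : Prop :=
  IsSimplex G k K ∧
    k - j + 1 ≤ {σ : Finset V | IsSimplex G j σ ∧ σ ⊆ K ∧
      ∀ K', IsSimplex G k K' → σ ⊆ K' → K' = K}.ncard

/-- The random complex `G_p` given birth times `t`: all singletons together with all
non-empty subsets of `(k+1)`-sets with birth time at most `p`. -/
def complexAt (k n : ℕ) (t : Finset (Fin n) → ℝ) (p : ℝ) : Set (Finset (Fin n)) :=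
  {A | (∃ v, A = {v}) ∨
    (A.Nonempty ∧ ∃ K : Finset (Fin n), K.card = k + 1 ∧ t K ≤ p ∧ A ⊆ K)}

/-- The distribution of birth times: i.i.d. uniform on `[0,1]`. -/
noncomputable def birthMeasure (n : ℕ) : Measure (Finset (Fin n) → ℝ) :=
  Measure.pi fun _ => volume.restrict (Set.Icc (0 : ℝ) 1)

/-- `p_{M_j}`: the supremum of the probabilities `p ∈ [0,1]` at which `G_p` contains
a copy of `M_j`. -/
noncomputable def pMj (k j n : ℕ) (t : Finset (Fin n) → ℝ) : ℝ :=
  sSup {p : ℝ | p ∈ Set.Icc (0 : ℝ) 1 ∧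
    ∃ K C J, IsMj (complexAt k n t p) k j K C J}

/-- The threshold `p_j`. -/
noncomputable def pjThreshold (k j n : ℕ) : ℝ :=
  ((j + 1 : ℝ) * Real.log n + Real.log (Real.log n)) * (Nat.factorial (k - j)) /
    (((k - j + 1 : ℕ) : ℝ) * (n : ℝ) ^ (k - j))

/-- `p_j^-`. -/
noncomputable def pjMinus (k j n : ℕ) : ℝ :=
  (1 - 1 / Real.sqrt (Real.log n)) * ((j + 1 : ℝ) * Real.log n) * (Nat.factorial (k - j)) /
    (((k - j + 1 : ℕ) : ℝ) * (n : ℝ) ^ (k - j))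

/-- `p_{j-1}^-`. -/
noncomputable def pjPrevMinus (k j n : ℕ) : ℝ :=
  (1 - 1 / Real.sqrt (Real.log n)) * ((j : ℝ) * Real.log n) * (Nat.factorial (k - j + 1)) /
    (((k - j + 2 : ℕ) : ℝ) * (n : ℝ) ^ (k - j + 1))

/-- `p_j^{(1)}`. -/
noncomputable def pjOne (k j n : ℕ) : ℝ :=
  1 / (10 * ((j : ℝ) + 1) * (Nat.choose (k + 1) (j + 1)) * (n : ℝ) ^ (k - j))

/-- The number of copies of `M_j^-` in `G`. -/
noncomputable def countMjMinus (k j : ℕ) {n : ℕ} (G : Set (Finset (Fin n))) : ℕ :=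
  {x : Finset (Fin n) × Finset (Fin n) | IsMjMinus G k j x.1 x.2}.ncard

/-- The number of copies of `M_j^*` in `G`. -/
noncomputable def countMjStar (k j : ℕ) {n : ℕ} (G : Set (Finset (Fin n))) : ℕ :=
  {x : Finset (Fin n) × Finset (Fin n) × Fin n × Fin n |
    IsMjStar G k j x.1 x.2.1 x.2.2.1 x.2.2.2}.ncard

/-!
A copy of `M_j^-` at `(K,C)` is the event that the potential `k`-simplex `K` is present while all
its rivals are absent, the rivals being the other potential `k`-simplices which contain a petal of
the flower `F(K,C)`. There are `N ~ (k-j+1) n^(k-j) / (k-j)!` rivals, so that at the time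
`p = ((j+1) log n + log log n + x) / N` about `n^(k+1) p exp (-p N) ≍ exp (-x)` such copies are
expected.

Below the threshold, `x → -∞`, one centre `C` is fixed for each `K`. Two of the events share only
`O(n^(k-j-1))` rivals, or else exclude each other, hence are asymptotically uncorrelated, and each
of them can be completed to a copy of `M_j^*` at negligible cost, since a given `j`-simplex of the
shell is missing with probability `o(1)`. The second moment method provides a copy of `M_j^*`,
whose shell is the required `j`-cycle.

The property of containing a copy of `M_j` is not monotone, so above the threshold, `x → ∞`, all
times after `p` have to be excluded at once. If `(K,C)` carries a copy of `M_j^-` at a later time,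
then either `K` is born before `p` and all its rivals after `p`, or all of them are born after `p`
and `K` is the first one. By symmetry the second event has probability at most `(1-p)^N / N`, which
is smaller than that of the first one, and the union bound applies.
-/

open scoped Finset Topology

/-! ### The second moment method -/

section SecondMoment

variable {Ω ι : Type*} {s : Finset ι} {E F : ι → Set Ω}

lemma sq_sum_indicator_one (x : Ω) :
    (∑ i ∈ s, (F i).indicator (1 : Ω → ℝ) x) ^ 2 =
      ∑ q ∈ s ×ˢ s, (F q.1 ∩ F q.2).indicator 1 x := by
  simp only [sq, Finset.sum_mul_sum, ← Finset.sum_product', Set.inter_indicator_one, Pi.mul_apply]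

variable [MeasurableSpace Ω] {μ : Measure Ω}

lemma integral_sum_indicator_one [IsFiniteMeasure μ] (hF : ∀ i ∈ s, MeasurableSet (F i)) :
    ∫ x, ∑ i ∈ s, (F i).indicator 1 x ∂μ = ∑ i ∈ s, μ.real (F i) := by
  have hint : ∀ i ∈ s, Integrable ((F i).indicator (1 : Ω → ℝ)) μ := fun i hi =>
    (integrable_const 1).indicator (hF i hi)
  rw [integral_finsetSum s hint]
  exact Finset.sum_congr rfl fun i hi => integral_indicator_one (hF i hi)

/-- Integrate `2 a Y - a² Y² ≤ 1_{Y ≠ 0}`, where `Y` counts the events that occur. -/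
lemma sub_le_measureReal_biUnion [IsFiniteMeasure μ] (hF : ∀ i ∈ s, MeasurableSet (F i)) (a : ℝ) :
    2 * a * ∑ i ∈ s, μ.real (F i) - a ^ 2 * ∑ i ∈ s, ∑ i' ∈ s, μ.real (F i ∩ F i') ≤
      μ.real (⋃ i ∈ s, F i) := by
  have hF₂ : ∀ q ∈ s ×ˢ s, MeasurableSet (F q.1 ∩ F q.2) := fun q hq =>
    (hF _ (Finset.mem_product.mp hq).1).inter (hF _ (Finset.mem_product.mp hq).2)
  have hU : MeasurableSet (⋃ i ∈ s, F i) := Finset.measurableSet_biUnion _ hF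
  have hint₁ : Integrable (fun x => ∑ i ∈ s, (F i).indicator (1 : Ω → ℝ) x) μ :=
    integrable_finsetSum s fun i hi => (integrable_const 1).indicator (hF i hi)
  have hint₂ : Integrable (fun x => ∑ q ∈ s ×ˢ s, (F q.1 ∩ F q.2).indicator (1 : Ω → ℝ) x) μ :=
    integrable_finsetSum _ fun q hq => (integrable_const 1).indicator (hF₂ q hq)
  rw [← Finset.sum_product', ← integral_sum_indicator_one hF, ← integral_sum_indicator_one hF₂,
    ← integral_const_mul, ← integral_const_mul,
    ← integral_sub (hint₁.const_mul _) (hint₂.const_mul _), ← integral_indicator_one hU]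
  refine integral_mono ((hint₁.const_mul _).sub (hint₂.const_mul _))
    ((integrable_const 1).indicator hU) fun x => ?_
  simp only [← sq_sum_indicator_one]
  by_cases hx : x ∈ ⋃ i ∈ s, F i
  · simp only [Set.indicator_of_mem hx, Pi.one_apply]
    linarith [sq_nonneg (1 - a * ∑ i ∈ s, (F i).indicator (1 : Ω → ℝ) x)]
  · have hzero : ∑ i ∈ s, (F i).indicator (1 : Ω → ℝ) x = 0 :=
      Finset.sum_eq_zero fun i hi =>
        Set.indicator_of_notMem (fun h => hx (Set.mem_biUnion hi h)) _
    simp [hzero, hx]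

lemma sum_measureReal_inter_le {R : ℝ} (hR : 0 ≤ R)
    (hE : ∀ i ∈ s, ∀ i' ∈ s, i ≠ i' →
      μ.real (E i ∩ E i') ≤ R * (μ.real (E i) * μ.real (E i'))) :
    ∑ i ∈ s, ∑ i' ∈ s, μ.real (E i ∩ E i') ≤
      ∑ i ∈ s, μ.real (E i) + R * (∑ i ∈ s, μ.real (E i)) ^ 2 := by
  have hpair : ∀ i ∈ s, ∀ i' ∈ s, μ.real (E i ∩ E i') ≤
      (if i = i' then μ.real (E i) else 0) + R * (μ.real (E i) * μ.real (E i')) := by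
    intro i hi i' hi'
    split_ifs with h
    · subst h
      rw [Set.inter_self]
      exact le_add_of_nonneg_right (by positivity)
    · simpa using hE i hi i' hi' h
  calc ∑ i ∈ s, ∑ i' ∈ s, μ.real (E i ∩ E i')
      ≤ ∑ i ∈ s, ∑ i' ∈ s, ((if i = i' then μ.real (E i) else 0) +
          R * (μ.real (E i) * μ.real (E i'))) :=
        Finset.sum_le_sum fun i hi => Finset.sum_le_sum fun i' hi' => hpair i hi i' hi'
    _ = _ := by
        simp only [Finset.sum_add_distrib, Finset.sum_ite_eq, ← Finset.mul_sum, sq,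
          Finset.sum_mul_sum]
        congr 1
        exact Finset.sum_congr rfl fun i hi => if_pos hi

lemma measureReal_compl_biUnion_le [IsProbabilityMeasure μ] {δ R : ℝ}
    (hF : ∀ i ∈ s, MeasurableSet (F i)) (hFE : ∀ i ∈ s, F i ⊆ E i)
    (hδ : ∀ i ∈ s, (1 - δ) * μ.real (E i) ≤ μ.real (F i)) (hR : 0 ≤ R)
    (hE : ∀ i ∈ s, ∀ i' ∈ s, i ≠ i' →
      μ.real (E i ∩ E i') ≤ R * (μ.real (E i) * μ.real (E i')))
    (hpos : 0 < ∑ i ∈ s, μ.real (E i)) :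
    μ.real (⋃ i ∈ s, F i)ᶜ ≤ (R - 1) + 2 * δ + (∑ i ∈ s, μ.real (E i))⁻¹ := by
  set m := ∑ i ∈ s, μ.real (E i) with hm
  have hfirst : 2 * (1 - δ) ≤ 2 * m⁻¹ * ∑ i ∈ s, μ.real (F i) := by
    have := Finset.sum_le_sum hδ
    rw [← Finset.mul_sum, ← hm] at this
    calc 2 * (1 - δ) = 2 * m⁻¹ * ((1 - δ) * m) := by field_simp
      _ ≤ _ := by gcongr
  have hsecond : m⁻¹ ^ 2 * ∑ i ∈ s, ∑ i' ∈ s, μ.real (F i ∩ F i') ≤ m⁻¹ + R := by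
    have hle : ∑ i ∈ s, ∑ i' ∈ s, μ.real (F i ∩ F i') ≤
        ∑ i ∈ s, ∑ i' ∈ s, μ.real (E i ∩ E i') :=
      Finset.sum_le_sum fun i hi => Finset.sum_le_sum fun i' hi' =>
        measureReal_mono (Set.inter_subset_inter (hFE i hi) (hFE i' hi'))
    calc _ ≤ m⁻¹ ^ 2 * (m + R * m ^ 2) := by
          gcongr
          exact hle.trans (sum_measureReal_inter_le hR hE)
      _ = m⁻¹ + R := by field_simp
  rw [probReal_compl_eq_one_sub (Finset.measurableSet_biUnion _ hF)]
  linarith [sub_le_measureReal_biUnion hF m⁻¹ (μ := μ)]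

end SecondMoment

lemma tendsto_measure_inter_one {Ω : ℕ → Type*} [∀ n, MeasurableSpace (Ω n)]
    {μ : ∀ n, Measure (Ω n)} [∀ n, IsProbabilityMeasure (μ n)] {A B : ∀ n, Set (Ω n)}
    (hA : Tendsto (fun n => (μ n).real (A n)ᶜ) atTop (𝓝 0))
    (hB : Tendsto (fun n => (μ n).real (B n)ᶜ) atTop (𝓝 0)) :
    Tendsto (fun n => μ n (A n ∩ B n)) atTop (𝓝 1) := by
  rw [← ENNReal.tendsto_toReal_iff (fun n => measure_ne_top _ _) ENNReal.one_ne_top,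
    ENNReal.toReal_one]
  have hlower : Tendsto (fun n => 1 - ((μ n).real (A n)ᶜ + (μ n).real (B n)ᶜ)) atTop (𝓝 1) := by
    simpa using (hA.add hB).const_sub 1
  refine tendsto_of_tendsto_of_tendsto_of_le_of_le hlower tendsto_const_nhds (fun n => ?_)
    fun n => measureReal_le_one
  have hcover := measureReal_union_le (μ := μ n) (A n ∩ B n) (A n ∩ B n)ᶜ
  rw [Set.union_compl_self, probReal_univ, Set.compl_inter] at hcover
  rw [sub_le_iff_le_add]
  exact hcover.trans (add_le_add_right (measureReal_union_le _ _) _)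

/-! ### Independent birth times -/

section BirthTimes

variable {ι : Type*}

/-- The event that every index in `A` is born by time `x`, and every index in `B` is born after
time `x`. -/
def birthBox (A B : Finset ι) (x : ℝ) : Set (ι → ℝ) :=
  {t | (∀ i ∈ A, t i ≤ x) ∧ ∀ i ∈ B, x < t i}

/-- The event that `i` is born after time `x`, and strictly before every other index in `S`. -/
def firstBorn (S : Finset ι) (x : ℝ) (i : ι) : Set (ι → ℝ) :=
  {t | x < t i ∧ ∀ l ∈ S, l ≠ i → t i < t l}

lemma birthBox_inter_birthBox [DecidableEq ι] (A B A' B' : Finset ι) (x : ℝ) :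
    birthBox A B x ∩ birthBox A' B' x = birthBox (A ∪ A') (B ∪ B') x := by
  ext t
  simp only [birthBox, Set.mem_inter_iff, Set.mem_ofPred_eq, Finset.mem_union, or_imp,
    forall_and]
  tauto

lemma birthBox_eq_empty {A B : Finset ι} (h : ¬ Disjoint A B) (x : ℝ) : birthBox A B x = ∅ := by
  obtain ⟨i, hA, hB⟩ := Finset.not_disjoint_iff.mp h
  exact Set.eq_empty_of_forall_notMem fun t ht => (ht.1 i hA).not_gt (ht.2 i hB)

lemma birthBox_eq_pi {A B : Finset ι} (h : Disjoint A B) (x : ℝ) :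
    birthBox A B x = Set.univ.pi fun i =>
      if i ∈ A then Set.Iic x else if i ∈ B then Set.Ioi x else Set.univ := by
  ext t
  refine ⟨fun ht i _ => ?_, fun ht => ⟨fun i hi => ?_, fun i hi => ?_⟩⟩
  · dsimp only
    split_ifs with hA hB
    exacts [ht.1 i hA, ht.2 i hB, trivial]
  · simpa [hi] using ht i trivial
  · simpa [hi, Finset.disjoint_right.mp h hi] using ht i trivial

lemma measurableSet_birthBox [Countable ι] (A B : Finset ι) (x : ℝ) :
    MeasurableSet (birthBox A B x) := by
  by_cases h : Disjoint A B
  · rw [birthBox_eq_pi h]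
    refine MeasurableSet.univ_pi fun i => ?_
    split_ifs
    exacts [measurableSet_Iic, measurableSet_Ioi, .univ]
  · rw [birthBox_eq_empty h]
    exact .empty

lemma measurableSet_firstBorn [Countable ι] (S : Finset ι) (x : ℝ) (i : ι) :
    MeasurableSet (firstBorn S x i) := by
  unfold firstBorn
  measurability

variable [Fintype ι] (ν : Measure ℝ) [IsProbabilityMeasure ν]

lemma measureReal_pi_birthBox {A B : Finset ι} (h : Disjoint A B) (x : ℝ) :
    (Measure.pi fun _ : ι => ν).real (birthBox A B x) =
      ν.real (Set.Iic x) ^ #A * ν.real (Set.Ioi x) ^ #B := by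
  have hfactor : ∀ i, ν.real (if i ∈ A then Set.Iic x else if i ∈ B then Set.Ioi x else .univ) =
      (if i ∈ A then ν.real (Set.Iic x) else 1) * if i ∈ B then ν.real (Set.Ioi x) else 1 := by
    intro i
    by_cases hA : i ∈ A
    · simp [hA, Finset.disjoint_left.mp h hA]
    · by_cases hB : i ∈ B <;> simp [hA, hB]
  rw [birthBox_eq_pi h, measureReal_def, Measure.pi_pi, ENNReal.toReal_prod]
  simp only [← measureReal_def, hfactor, Finset.prod_mul_distrib, Finset.prod_ite_mem,
    Finset.univ_inter, Finset.prod_const]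

lemma measureReal_pi_firstBorn_eq {S : Finset ι} {i l : ι} (hi : i ∈ S) (hl : l ∈ S) (x : ℝ) :
    (Measure.pi fun _ : ι => ν).real (firstBorn S x i) =
      (Measure.pi fun _ : ι => ν).real (firstBorn S x l) := by
  have hswap := measurePreserving_piCongrLeft (fun _ : ι => ν) (Equiv.swap i l)
  rw [measureReal_def, measureReal_def,
    ← hswap.measure_preimage (measurableSet_firstBorn S x i).nullMeasurableSet]
  congr 2
  ext t
  have happly : ∀ m, MeasurableEquiv.piCongrLeft (fun _ => ℝ) (Equiv.swap i l) t m =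
      t (Equiv.swap i l m) := fun m => by
    rw [MeasurableEquiv.coe_piCongrLeft]
    simpa using Equiv.piCongrLeft_apply_apply (fun _ => ℝ) (Equiv.swap i l) t (Equiv.swap i l m)
  simp only [firstBorn, Set.mem_preimage, Set.mem_ofPred_eq, happly, Equiv.swap_apply_left]
  refine and_congr_right fun _ => ⟨fun h m hm hne => ?_, fun h m hm hne => ?_⟩
  · rcases eq_or_ne m i with rfl | hmi
    · simpa using h l hl hne.symm
    · simpa [Equiv.swap_apply_of_ne_of_ne hmi hne] using h m hm hmi
  · rcases eq_or_ne m l with rfl | hml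
    · simpa using h i hi hne.symm
    · simpa [Equiv.swap_apply_of_ne_of_ne hne hml] using h m hm hml

/-- By symmetry, each index of `S` is equally likely to be the first. -/
lemma card_mul_measureReal_pi_firstBorn_le {S : Finset ι} {i : ι} (hi : i ∈ S) (x : ℝ) :
    #S * (Measure.pi fun _ : ι => ν).real (firstBorn S x i) ≤ ν.real (Set.Ioi x) ^ #S := by
  have hdisj : (S : Set ι).PairwiseDisjoint (firstBorn S x) := fun l hl l' hl' hne =>
    Set.disjoint_left.mpr fun t ht ht' => (ht.2 l' hl' hne.symm).not_gt (ht'.2 l hl hne)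
  have hsub : ⋃ l ∈ S, firstBorn S x l ⊆ birthBox ∅ S x := by
    refine Set.iUnion₂_subset fun l _ t ht => ⟨by simp, fun l' hl' => ?_⟩
    rcases eq_or_ne l' l with rfl | hne
    exacts [ht.1, ht.1.trans (ht.2 l' hl' hne)]
  calc #S * (Measure.pi fun _ : ι => ν).real (firstBorn S x i)
      = ∑ l ∈ S, (Measure.pi fun _ : ι => ν).real (firstBorn S x l) := by
        rw [← nsmul_eq_mul, ← Finset.sum_const]
        exact Finset.sum_congr rfl fun l hl => measureReal_pi_firstBorn_eq ν hi hl x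
    _ = (Measure.pi fun _ : ι => ν).real (⋃ l ∈ S, firstBorn S x l) :=
        (measureReal_biUnion_finset hdisj fun l _ => measurableSet_firstBorn S x l).symm
    _ ≤ (Measure.pi fun _ : ι => ν).real (birthBox ∅ S x) := measureReal_mono hsub
    _ = ν.real (Set.Ioi x) ^ #S := by
        simp [measureReal_pi_birthBox ν (Finset.disjoint_empty_left S)]

end BirthTimes

section BirthMeasure

variable {n : ℕ} {p : ℝ}

instance : IsProbabilityMeasure (volume.restrict (Set.Icc (0 : ℝ) 1)) :=
  ⟨by simp⟩

instance (n : ℕ) : IsProbabilityMeasure (birthMeasure n) := by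
  unfold birthMeasure
  infer_instance

lemma measureReal_restrict_Icc_Iic (hp : p ∈ Set.Icc (0 : ℝ) 1) :
    (volume.restrict (Set.Icc (0 : ℝ) 1)).real (Set.Iic p) = p := by
  have : Set.Iic p ∩ Set.Icc 0 1 = Set.Icc 0 p := by grind
  rw [measureReal_restrict_apply measurableSet_Iic, this, Real.volume_real_Icc_of_le hp.1,
    sub_zero]

lemma measureReal_restrict_Icc_Ioi (hp : p ∈ Set.Icc (0 : ℝ) 1) :
    (volume.restrict (Set.Icc (0 : ℝ) 1)).real (Set.Ioi p) = 1 - p := by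
  rw [← Set.compl_Iic, probReal_compl_eq_one_sub measurableSet_Iic,
    measureReal_restrict_Icc_Iic hp]

lemma birthMeasure_real_birthBox (hp : p ∈ Set.Icc (0 : ℝ) 1) {A B : Finset (Finset (Fin n))}
    (h : Disjoint A B) :
    (birthMeasure n).real (birthBox A B p) = p ^ #A * (1 - p) ^ #B := by
  rw [birthMeasure, measureReal_pi_birthBox _ h, measureReal_restrict_Icc_Iic hp,
    measureReal_restrict_Icc_Ioi hp]

lemma birthMeasure_real_firstBorn_le (hp : p ∈ Set.Icc (0 : ℝ) 1) {S : Finset (Finset (Fin n))}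
    {K : Finset (Fin n)} (hK : K ∈ S) :
    (birthMeasure n).real (firstBorn S p K) ≤ (1 - p) ^ #S / #S := by
  have hS : (0 : ℝ) < #S := mod_cast Finset.card_pos.mpr ⟨K, hK⟩
  rw [le_div_iff₀' hS, ← measureReal_restrict_Icc_Ioi hp]
  exact card_mul_measureReal_pi_firstBorn_le _ hK p

/-- Only the indices which both boxes require to be late make the two events positively
correlated. -/
lemma pow_card_inter_mul_birthMeasure_real_inter_le (hp : p ∈ Set.Icc (0 : ℝ) 1)
    {A B A' B' : Finset (Finset (Fin n))} (hA : Disjoint A B) (hA' : Disjoint A' B')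
    (hAA' : Disjoint A A') :
    (1 - p) ^ #(B ∩ B') * (birthMeasure n).real (birthBox A B p ∩ birthBox A' B' p) ≤
      (birthMeasure n).real (birthBox A B p) * (birthMeasure n).real (birthBox A' B' p) := by
  have hp' : 0 ≤ 1 - p := sub_nonneg.mpr hp.2
  rw [birthBox_inter_birthBox, birthMeasure_real_birthBox hp hA, birthMeasure_real_birthBox hp hA']
  by_cases h : Disjoint (A ∪ A') (B ∪ B')
  · rw [birthMeasure_real_birthBox hp h, Finset.card_union_of_disjoint hAA']
    refine le_of_eq ?_
    calc _ = p ^ (#A + #A') * (1 - p) ^ (#(B ∪ B') + #(B ∩ B')) := by ring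
      _ = _ := by rw [Finset.card_union_add_card_inter]; ring
  · rw [birthBox_eq_empty h, measureReal_empty, mul_zero]
    have := hp.1
    positivity

end BirthMeasure

/-! ### Flowers and the simplices meeting them -/

section Flowers

variable [DecidableEq V] {k j : ℕ} {K K' C C' L Q τ : Finset V} {w a : V}

lemma even_card_filter_subset_powersetCard {A : Finset V} (hA : #A = j + 2)
    (hτ : #τ = j) : Even #{σ ∈ A.powersetCard (j + 1) | τ ⊆ σ} := by
  by_cases hτA : τ ⊆ A
  · have hcard : #{σ ∈ A.powersetCard (j + 1) | τ ⊆ σ} = (j + 2 - j).choose (j + 1 - j) := by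
      rw [← hA, ← hτ]
      convert Finset.card_filter_powersetCard_subset τ A (#τ + 1) hτA (Nat.le_succ _)
    rw [hcard, Nat.add_sub_cancel_left, Nat.add_sub_cancel_left]
    exact even_two
  · rw [Finset.filter_false_of_mem fun σ hσ hτσ =>
      hτA (hτσ.trans (Finset.mem_powersetCard.mp hσ).1)]
    simp

/-- The boundary of the shell is the `j`-cycle, and `C ∪ {w}` is the only petal it contains. -/
lemma IsMjStar.isMj {G : Set (Finset V)}
    (h : IsMjStar G k j K C w a) :
    IsMj G k j K C ((insert a (insert w C)).powersetCard (j + 1)) := by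
  obtain ⟨hminus, hw, ha, hcard, hshell⟩ := h
  obtain ⟨-, -, hC, -, -⟩ := id hminus
  have hwC : w ∉ C := (Finset.mem_sdiff.mp hw).2
  refine ⟨hminus, ⟨fun σ hσ => ?_, fun τ hτ => ?_⟩, insert w C, ⟨?_, w, hw, rfl⟩, ?_⟩
  · obtain ⟨hσA, hσ⟩ := Finset.mem_powersetCard.mp hσ
    exact ⟨hshell σ hσA hσ, hσ⟩
  · convert even_card_filter_subset_powersetCard hcard hτ
  · exact Finset.mem_powersetCard.mpr
      ⟨Finset.subset_insert _ _, by rw [Finset.card_insert_of_notMem hwC, hC]⟩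
  · rintro _ ⟨hP, w', hw', rfl⟩
    have hmem := (Finset.mem_powersetCard.mp hP).1 (Finset.mem_insert_self w' C)
    grind

/-- Vertex data `(K,C,w,a)` that can carry a copy of `M_j^*`. -/
structure IsStarFrame (k j : ℕ) (K C : Finset V) (w a : V) : Prop where
  card_simplex : #K = k + 1
  card_centre : #C = j
  centre_subset : C ⊆ K
  mem_sdiff : w ∈ K \ C
  notMem : a ∉ K

lemma card_petal (hC : #C = j) (hw : w ∈ K \ C) : #(insert w C) = j + 1 := by
  rw [Finset.card_insert_of_notMem (Finset.mem_sdiff.mp hw).2, hC]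

lemma petal_subset (hCK : C ⊆ K) (hw : w ∈ K \ C) : insert w C ⊆ K :=
  Finset.insert_subset (Finset.mem_sdiff.mp hw).1 hCK

lemma card_sdiff_centre (hK : #K = k + 1) (hC : #C = j) (hCK : C ⊆ K) (hjk : j ≤ k) :
    #(K \ C) = k - j + 1 := by
  rw [Finset.card_sdiff_of_subset hCK]
  lia

lemma exists_isStarFrame [Fintype V] (hjk : j ≤ k) (hK : #K = k + 1)
    (hV : k + 2 ≤ Fintype.card V) : ∃ C w a, IsStarFrame k j K C w a := by
  obtain ⟨C, hCK, hC⟩ := Finset.exists_subset_card_eq (hjk.trans (k.le_succ.trans_eq hK.symm))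
  obtain ⟨w, hw⟩ : (K \ C).Nonempty := by
    rw [← Finset.card_pos, card_sdiff_centre hK hC hCK hjk]
    exact Nat.succ_pos _
  obtain ⟨a, -, ha⟩ := Finset.exists_mem_notMem_of_card_lt_card (s := K) (t := .univ)
    (by rw [hK, Finset.card_univ]; lia)
  exact ⟨C, w, a, hK, hC, hCK, hw, ha⟩

variable [Fintype V]

/-- The potential `k`-simplices containing `Q`. -/
def cofaces (k : ℕ) (Q : Finset V) : Finset (Finset V) :=
  {L ∈ Finset.univ.powersetCard (k + 1) | Q ⊆ L}

/-- The potential `k`-simplices other than `K` which contain a petal of the flower `F(K,C)`: a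
copy of `M_j^-` at `(K,C)` is the presence of `K` and the absence of all its rivals. -/
def rivals (k : ℕ) (K C : Finset V) : Finset (Finset V) :=
  ((K \ C).biUnion fun w => cofaces k (insert w C)).erase K

lemma mem_cofaces : L ∈ cofaces k Q ↔ #L = k + 1 ∧ Q ⊆ L := by
  simp [cofaces]

lemma mem_rivals :
    L ∈ rivals k K C ↔ L ≠ K ∧ ∃ w ∈ K \ C, #L = k + 1 ∧ insert w C ⊆ L := by
  simp only [rivals, Finset.mem_erase, Finset.mem_biUnion, mem_cofaces]

lemma notMem_rivals_self : K ∉ rivals k K C := Finset.notMem_erase _ _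

lemma card_cofaces (hQ : #Q ≤ k + 1) :
    #(cofaces k Q) = (Fintype.card V - #Q).choose (k + 1 - #Q) := by
  rw [cofaces, ← Finset.card_univ]
  convert Finset.card_filter_powersetCard_subset Q .univ (k + 1) (Finset.subset_univ Q) hQ

lemma card_cofaces_le_pow {s : ℕ} (hQ : s ≤ #Q) (hV : 0 < Fintype.card V) :
    #(cofaces k Q) ≤ Fintype.card V ^ (k + 1 - s) := by
  rcases le_or_gt #Q (k + 1) with hQk | hQk
  · calc #(cofaces k Q) = (Fintype.card V - #Q).choose (k + 1 - #Q) := card_cofaces hQk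
      _ ≤ (Fintype.card V - #Q) ^ (k + 1 - #Q) := Nat.choose_le_pow _ _
      _ ≤ Fintype.card V ^ (k + 1 - #Q) := Nat.pow_le_pow_left (Nat.sub_le _ _) _
      _ ≤ Fintype.card V ^ (k + 1 - s) := Nat.pow_le_pow_right hV (by lia)
  · have hempty : cofaces k Q = ∅ := Finset.eq_empty_of_forall_notMem fun L hL => by
      obtain ⟨hL, hQL⟩ := mem_cofaces.mp hL
      exact (Finset.card_le_card hQL).not_gt (by lia)
    simp [hempty]

lemma card_filter_inter_eq {r : ℕ} (hQK : Q ⊆ K) (hQ : #Q ≤ r) :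
    #{L ∈ Finset.univ.powersetCard r | L ∩ K = Q} =
      (Fintype.card V - #K).choose (r - #Q) := by
  have hset : ({L ∈ Finset.univ.powersetCard r | L ∩ K = Q} : Finset (Finset V)) =
      {L ∈ (K \ Q)ᶜ.powersetCard r | Q ⊆ L} := by
    ext L
    simp only [Finset.mem_filter, Finset.mem_powersetCard,
      Finset.ext_iff, Finset.subset_iff, Finset.mem_compl, Finset.mem_sdiff, Finset.mem_inter]
    grind
  have hQsub : Q ⊆ (K \ Q)ᶜ := Finset.subset_compl_iff_disjoint_right.mpr Finset.disjoint_sdiff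
  have hcard : #(K \ Q)ᶜ - #Q = Fintype.card V - #K := by
    rw [Finset.card_compl, Finset.card_sdiff_of_subset hQK]
    have := Finset.card_le_card hQK
    have := Finset.card_le_univ K
    lia
  rw [hset, ← hcard]
  convert Finset.card_filter_powersetCard_subset Q _ r hQsub hQ

lemma card_rivals_le (hK : #K = k + 1) (hC : #C = j) (hCK : C ⊆ K) (hjk : j ≤ k) :
    #(rivals k K C) ≤ (k - j + 1) * (Fintype.card V).choose (k - j) := by
  calc #(rivals k K C) ≤ #((K \ C).biUnion fun w => cofaces k (insert w C)) :=
        Finset.card_erase_le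
    _ ≤ #(K \ C) * (Fintype.card V).choose (k - j) := by
        refine Finset.card_biUnion_le_card_mul _ _ _ fun w hw => ?_
        have hcard := card_petal hC hw
        rw [card_cofaces (by lia), hcard, Nat.add_sub_add_right]
        exact Nat.choose_le_choose _ (Nat.sub_le _ _)
    _ = _ := by rw [card_sdiff_centre hK hC hCK hjk]

/-- Only the simplices meeting `K` in exactly one petal are counted. -/
lemma le_card_rivals (hK : #K = k + 1) (hC : #C = j) (hCK : C ⊆ K) (hjk : j < k) :
    (k - j + 1) * (Fintype.card V - (k + 1)).choose (k - j) ≤ #(rivals k K C) := by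
  let D (w : V) : Finset (Finset V) :=
    {L ∈ Finset.univ.powersetCard (k + 1) | L ∩ K = insert w C}
  have hD {w : V} {L : Finset V} : L ∈ D w ↔ #L = k + 1 ∧ L ∩ K = insert w C := by simp [D]
  have hdisj : (↑(K \ C) : Set V).PairwiseDisjoint D := by
    intro w hw w' _ hne
    refine Finset.disjoint_left.mpr fun L hL hL' => hne ?_
    have heq : insert w C = insert w' C := (hD.mp hL).2.symm.trans (hD.mp hL').2
    have hmem : w ∈ insert w' C := heq ▸ Finset.mem_insert_self w C
    exact (Finset.mem_insert.mp hmem).resolve_right (Finset.mem_sdiff.mp hw).2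
  have hsub : (K \ C).biUnion D ⊆ rivals k K C := by
    refine Finset.biUnion_subset.mpr fun w hw L hL => ?_
    obtain ⟨hL, hLK⟩ := hD.mp hL
    refine mem_rivals.mpr ⟨fun h => ?_, w, hw, hL, hLK ▸ Finset.inter_subset_left⟩
    have := card_petal hC hw
    rw [← hLK, h, Finset.inter_self] at this
    lia
  have hcardD : ∀ w ∈ K \ C, #(D w) = (Fintype.card V - (k + 1)).choose (k - j) := by
    intro w hw
    rw [card_filter_inter_eq (petal_subset hCK hw) (by rw [card_petal hC hw]; lia), hK,
      card_petal hC hw, Nat.add_sub_add_right]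
  calc _ = ∑ w ∈ K \ C, #(D w) := by
        rw [Finset.sum_congr rfl hcardD, Finset.sum_const, smul_eq_mul,
          card_sdiff_centre hK hC hCK hjk.le]
    _ = #((K \ C).biUnion D) := (Finset.card_biUnion hdisj).symm
    _ ≤ #(rivals k K C) := Finset.card_le_card hsub

/-- A common rival contains a petal of each flower. If `K` is no rival of `(K',C')`, these two
petals are distinct, so their union has at least `j + 2` vertices. -/
lemma card_rivals_inter_rivals_le (hK : #K = k + 1) (hC : #C = j) (hCK : C ⊆ K)
    (hK' : #K' = k + 1) (hC' : #C' = j) (hne : K ≠ K') (hrival : K ∉ rivals k K' C') :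
    #(rivals k K C ∩ rivals k K' C') ≤ (k + 1) ^ 2 * Fintype.card V ^ (k - j - 1) := by
  have hV : 0 < Fintype.card V := by
    have := Finset.card_le_univ K
    lia
  have hsub : rivals k K C ∩ rivals k K' C' ⊆ ((K \ C) ×ˢ (K' \ C')).biUnion fun q =>
      cofaces k (insert q.1 C ∪ insert q.2 C') := by
    intro L hL
    obtain ⟨hL₁, hL₂⟩ := Finset.mem_inter.mp hL
    obtain ⟨-, w, hw, hLcard, hwL⟩ := mem_rivals.mp hL₁
    obtain ⟨-, w', hw', -, hwL'⟩ := mem_rivals.mp hL₂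
    exact Finset.mem_biUnion.mpr ⟨(w, w'), Finset.mem_product.mpr ⟨hw, hw'⟩,
      mem_cofaces.mpr ⟨hLcard, Finset.union_subset hwL hwL'⟩⟩
  calc _ ≤ #((K \ C) ×ˢ (K' \ C')) * Fintype.card V ^ (k - j - 1) := by
        refine (Finset.card_le_card hsub).trans (Finset.card_biUnion_le_card_mul _ _ _ ?_)
        rintro ⟨w, w'⟩ hq
        obtain ⟨hw, hw'⟩ := Finset.mem_product.mp hq
        have hpetals : insert w C ≠ insert w' C' := fun h =>
          hrival (mem_rivals.mpr ⟨hne, w', hw', hK, h ▸ petal_subset hCK hw⟩)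
        have hcard := card_petal hC hw
        have hcard' := card_petal hC' hw'
        have hss : insert w C ⊂ insert w C ∪ insert w' C' :=
          Finset.subset_union_left.ssubset_of_ne fun h => hpetals
            (Finset.eq_of_subset_of_card_le (Finset.union_eq_left.mp h.symm) (by lia)).symm
        have := Finset.card_lt_card hss
        exact (card_cofaces_le_pow (s := j + 2) (by lia) hV).trans_eq (by congr 1; lia)
    _ ≤ _ := by
        rw [Finset.card_product, sq]
        gcongr
        · rw [← hK]
          exact Finset.card_le_card Finset.sdiff_subset
        · rw [← hK']
          exact Finset.card_le_card Finset.sdiff_subset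

lemma le_card_cofaces_sdiff_rivals (hK : #K = k + 1) (hC : #C = j) (hCK : C ⊆ K) (hjk : j ≤ k)
    (ha : a ∉ K) (hτ : #τ = j + 1) (hτK : τ ⊆ insert a K) (haτ : a ∈ τ) :
    (Fintype.card V - (k + 2)).choose (k - j) ≤ #(cofaces k τ \ rivals k K C) := by
  have hsub : ({L ∈ Finset.univ.powersetCard (k + 1) | L ∩ insert a K = τ} : Finset (Finset V)) ⊆
      cofaces k τ \ rivals k K C := by
    intro L hL
    obtain ⟨hL, hLτ⟩ := Finset.mem_filter.mp hL
    refine Finset.mem_sdiff.mpr ⟨mem_cofaces.mpr ⟨(Finset.mem_powersetCard.mp hL).2,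
      hLτ ▸ Finset.inter_subset_left⟩, fun hrival => ?_⟩
    obtain ⟨-, w, hw, -, hwL⟩ := mem_rivals.mp hrival
    have hpetal : insert w C ⊆ τ := hLτ ▸ Finset.subset_inter hwL
      ((petal_subset hCK hw).trans (Finset.subset_insert a K))
    have heq := Finset.eq_of_subset_of_card_le hpetal (by rw [hτ, card_petal hC hw])
    exact ha (petal_subset hCK hw (heq ▸ haτ))
  refine le_of_eq_of_le ?_ (Finset.card_le_card hsub)
  rw [card_filter_inter_eq hτK (by lia), Finset.card_insert_of_notMem ha, hK, hτ,
    Nat.add_sub_add_right]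

end Flowers

/-! ### Copies of `M_j` in the random complex -/

section RandomComplex

variable {k j n : ℕ} {p : ℝ} {t : Finset (Fin n) → ℝ} {A K L C : Finset (Fin n)} {w a : Fin n}

lemma mem_complexAt_iff (hA : 1 < #A) :
    A ∈ complexAt k n t p ↔ ∃ L ∈ cofaces k A, t L ≤ p := by
  have hsingle : ¬ ∃ v, A = {v} := by
    rintro ⟨v, rfl⟩
    exact hA.ne' (Finset.card_singleton v)
  have hne : A.Nonempty := Finset.card_pos.mp (zero_lt_one.trans hA)
  simp only [complexAt, Set.mem_ofPred_eq, hsingle, false_or, hne, true_and, mem_cofaces]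
  exact exists_congr fun L => by tauto

lemma isSimplex_complexAt_iff (hk : 0 < k) :
    IsSimplex (complexAt k n t p) k L ↔ #L = k + 1 ∧ t L ≤ p := by
  rw [IsSimplex, and_comm, and_congr_right_iff]
  intro hL
  rw [mem_complexAt_iff (by lia)]
  refine ⟨fun ⟨L', hL', ht⟩ => ?_, fun ht => ⟨L, mem_cofaces.mpr ⟨hL, subset_rfl⟩, ht⟩⟩
  obtain ⟨hcard, hsub⟩ := mem_cofaces.mp hL'
  rwa [Finset.eq_of_subset_of_card_le hsub (hcard.trans hL.symm).le]

lemma isMjMinus_complexAt_iff (hj : 0 < j) (hk : 0 < k) :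
    IsMjMinus (complexAt k n t p) k j K C ↔
      (#K = k + 1 ∧ #C = j ∧ C ⊆ K) ∧ t ∈ birthBox {K} (rivals k K C) p := by
  simp only [IsMjMinus, isSimplex_complexAt_iff hk, birthBox, Set.mem_ofPred_eq,
    Finset.mem_singleton, forall_eq, mem_rivals]
  constructor
  · rintro ⟨⟨hK, ht⟩, -, hC, hCK, hlonely⟩
    refine ⟨⟨hK, hC, hCK⟩, ht, fun L ⟨hne, w, hw, hL, hwL⟩ => ?_⟩
    by_contra! htL
    exact hne (hlonely _ ⟨w, hw, rfl⟩ L ⟨hL, htL⟩ hwL)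
  · rintro ⟨⟨hK, hC, hCK⟩, ht, hlate⟩
    have hCne : C.Nonempty := Finset.card_pos.mp (hC ▸ hj)
    refine ⟨⟨hK, ht⟩, Or.inr ⟨hCne, K, hK, ht, hCK⟩, hC, hCK, ?_⟩
    rintro _ ⟨w, hw, rfl⟩ L ⟨hL, htL⟩ hwL
    by_contra hne
    exact (hlate L ⟨hne, w, hw, hL, hwL⟩).not_ge htL

/-- The faces of the shell on `C ∪ {w, a}` which contain `a`, that is, all of them but `C ∪ {w}`. -/
def newFaces (j : ℕ) (C : Finset (Fin n)) (w a : Fin n) : Finset (Finset (Fin n)) :=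
  {τ ∈ (insert a (insert w C)).powersetCard (j + 1) | a ∈ τ}

/-- The event that there is a copy of `M_j^*` at `(K,C,w,a)` at time `p`. -/
def starEvent (k j : ℕ) (p : ℝ) (K C : Finset (Fin n)) (w a : Fin n) :
    Set (Finset (Fin n) → ℝ) :=
  birthBox {K} (rivals k K C) p \ ⋃ τ ∈ newFaces j C w a, birthBox ∅ (cofaces k τ) p

lemma measurableSet_starEvent : MeasurableSet (starEvent k j p K C w a) :=
  (measurableSet_birthBox _ _ _).diff
    (Finset.measurableSet_biUnion _ fun _ _ => measurableSet_birthBox _ _ _)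

lemma IsStarFrame.isMjStar (h : IsStarFrame k j K C w a) (hj : 0 < j) (hk : 0 < k)
    (ht : t ∈ starEvent k j p K C w a) : IsMjStar (complexAt k n t p) k j K C w a := by
  obtain ⟨hK, hC, hCK, hw, ha⟩ := h
  obtain ⟨hbox, hshell⟩ := ht
  have hpetal : #(insert w C) = j + 1 := card_petal hC hw
  have haw : a ∉ insert w C := fun h => ha (petal_subset hCK hw h)
  refine ⟨(isMjMinus_complexAt_iff hj hk).mpr ⟨⟨hK, hC, hCK⟩, hbox⟩, hw, ha,
    by rw [Finset.card_insert_of_notMem haw, hpetal], fun τ hτA hτ => ?_⟩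
  rw [mem_complexAt_iff (by lia)]
  by_cases haτ : a ∈ τ
  · by_contra! hlate
    exact hshell (Set.mem_biUnion (Finset.mem_filter.mpr
      ⟨Finset.mem_powersetCard.mpr ⟨hτA, hτ⟩, haτ⟩) ⟨by simp, hlate⟩)
  · have hτC : τ ⊆ insert w C := (Finset.subset_insert_iff_of_notMem haτ).mp hτA
    exact ⟨K, mem_cofaces.mpr ⟨hK, hτC.trans (petal_subset hCK hw)⟩, hbox.1 K (by simp)⟩

lemma birthMeasure_real_birthBox_rivals (hp : p ∈ Set.Icc (0 : ℝ) 1) :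
    (birthMeasure n).real (birthBox {K} (rivals k K C) p) = p * (1 - p) ^ #(rivals k K C) := by
  rw [birthMeasure_real_birthBox hp (Finset.disjoint_singleton_left.mpr notMem_rivals_self),
    Finset.card_singleton, pow_one]

lemma IsStarFrame.le_birthMeasure_real_birthBox_rivals (h : IsStarFrame k j K C w a) (hjk : j ≤ k)
    (hp : p ∈ Set.Icc (0 : ℝ) 1) :
    p * (1 - p) ^ ((k - j + 1) * n.choose (k - j)) ≤
      (birthMeasure n).real (birthBox {K} (rivals k K C) p) := by
  have hcard := card_rivals_le h.card_simplex h.card_centre h.centre_subset hjk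
  rw [Fintype.card_fin] at hcard
  rw [birthMeasure_real_birthBox_rivals hp]
  exact mul_le_mul_of_nonneg_left
    (pow_le_pow_of_le_one (sub_nonneg.mpr hp.2) (sub_le_self 1 hp.1) hcard) hp.1

lemma IsStarFrame.birthMeasure_real_inter_birthBox_le (h : IsStarFrame k j K C w a) (hjk : j ≤ k)
    (hp : p ∈ Set.Icc (0 : ℝ) 1) {τ : Finset (Fin n)} (hτ : τ ∈ newFaces j C w a) :
    (birthMeasure n).real (birthBox {K} (rivals k K C) p ∩ birthBox ∅ (cofaces k τ) p) ≤
      (1 - p) ^ (n - (k + 2)).choose (k - j) *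
        (birthMeasure n).real (birthBox {K} (rivals k K C) p) := by
  obtain ⟨hτ, haτ⟩ := Finset.mem_filter.mp hτ
  obtain ⟨hτA, hτ⟩ := Finset.mem_powersetCard.mp hτ
  have hτK : τ ⊆ insert a K :=
    hτA.trans (Finset.insert_subset_insert a (petal_subset h.centre_subset h.mem_sdiff))
  have hcount := le_card_cofaces_sdiff_rivals h.card_simplex h.card_centre h.centre_subset hjk
    h.notMem hτ hτK haτ
  rw [Fintype.card_fin] at hcount
  have hdisj : Disjoint {K} (rivals k K C ∪ cofaces k τ) := by
    rw [Finset.disjoint_singleton_left, Finset.mem_union, not_or]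
    exact ⟨notMem_rivals_self, fun hK => h.notMem ((mem_cofaces.mp hK).2 haτ)⟩
  have hp' : 0 ≤ 1 - p := sub_nonneg.mpr hp.2
  have hp'' : 1 - p ≤ 1 := sub_le_self 1 hp.1
  rw [birthBox_inter_birthBox, Finset.union_empty, birthMeasure_real_birthBox hp hdisj,
    birthMeasure_real_birthBox_rivals hp, Finset.card_singleton, ← Finset.union_sdiff_self_eq_union,
    Finset.card_union_of_disjoint Finset.disjoint_sdiff]
  calc p ^ 1 * (1 - p) ^ (#(rivals k K C) + #(cofaces k τ \ rivals k K C))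
      = (1 - p) ^ #(cofaces k τ \ rivals k K C) * (p * (1 - p) ^ #(rivals k K C)) := by ring
    _ ≤ _ := mul_le_mul_of_nonneg_right (pow_le_pow_of_le_one hp' hp'' hcount)
        (mul_nonneg hp.1 (pow_nonneg hp' _))

lemma IsStarFrame.le_birthMeasure_real_starEvent (h : IsStarFrame k j K C w a) (hjk : j ≤ k)
    (hp : p ∈ Set.Icc (0 : ℝ) 1) :
    (1 - (j + 2) * (1 - p) ^ (n - (k + 2)).choose (k - j)) *
        (birthMeasure n).real (birthBox {K} (rivals k K C) p) ≤
      (birthMeasure n).real (starEvent k j p K C w a) := by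
  set E := birthBox {K} (rivals k K C) p with hE
  set q := (1 - p) ^ (n - (k + 2)).choose (k - j)
  have hq : 0 ≤ q := pow_nonneg (sub_nonneg.mpr hp.2) _
  have haw : a ∉ insert w C := fun ha => h.notMem (petal_subset h.centre_subset h.mem_sdiff ha)
  have hfaces : #(newFaces j C w a) ≤ j + 2 := by
    refine (Finset.card_filter_le _ _).trans_eq ?_
    rw [Finset.card_powersetCard, Finset.card_insert_of_notMem haw,
      card_petal h.card_centre h.mem_sdiff, Nat.choose_succ_self_right]
  have hbad : (birthMeasure n).real (E ∩ ⋃ τ ∈ newFaces j C w a, birthBox ∅ (cofaces k τ) p) ≤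
      (j + 2) * q * (birthMeasure n).real E := by
    rw [Set.inter_iUnion₂]
    calc _ ≤ ∑ τ ∈ newFaces j C w a, (birthMeasure n).real (E ∩ birthBox ∅ (cofaces k τ) p) :=
          measureReal_biUnion_finset_le _ _
      _ ≤ #(newFaces j C w a) • (q * (birthMeasure n).real E) :=
          Finset.sum_le_card_nsmul _ _ _ fun τ hτ =>
            h.birthMeasure_real_inter_birthBox_le hjk hp hτ
      _ ≤ (j + 2) * q * (birthMeasure n).real E := by
          rw [nsmul_eq_mul, ← mul_assoc]
          gcongr
          exact_mod_cast hfaces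
  have hsplit := measureReal_inter_add_sdiff (μ := birthMeasure n) (s := E)
    (Finset.measurableSet_biUnion (newFaces j C w a) fun τ _ =>
      measurableSet_birthBox ∅ (cofaces k τ) p)
  rw [starEvent, ← hE]
  linarith

lemma IsStarFrame.birthMeasure_real_inter_le {K' C' : Finset (Fin n)} {w' a' : Fin n}
    (h : IsStarFrame k j K C w a) (h' : IsStarFrame k j K' C' w' a') (hne : K ≠ K')
    (hp : p ∈ Set.Ioo (0 : ℝ) 1) :
    (birthMeasure n).real (birthBox {K} (rivals k K C) p ∩ birthBox {K'} (rivals k K' C') p) ≤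
      ((1 - p) ^ ((k + 1) ^ 2 * n ^ (k - j - 1)))⁻¹ *
        ((birthMeasure n).real (birthBox {K} (rivals k K C) p) *
          (birthMeasure n).real (birthBox {K'} (rivals k K' C') p)) := by
  have hp' : 0 < 1 - p := sub_pos.mpr hp.2
  by_cases hrival : K ∈ rivals k K' C'
  · rw [birthBox_inter_birthBox, birthBox_eq_empty, measureReal_empty]
    · positivity
    · exact Finset.not_disjoint_iff.mpr ⟨K, by simp, Finset.mem_union_right _ hrival⟩
  · have hcard := card_rivals_inter_rivals_le h.card_simplex h.card_centre h.centre_subset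
      h'.card_simplex h'.card_centre hne hrival
    rw [Fintype.card_fin] at hcard
    rw [le_inv_mul_iff₀ (by positivity)]
    calc _ ≤ (1 - p) ^ #(rivals k K C ∩ rivals k K' C') *
          (birthMeasure n).real
            (birthBox {K} (rivals k K C) p ∩ birthBox {K'} (rivals k K' C') p) :=
          mul_le_mul_of_nonneg_right
            (pow_le_pow_of_le_one hp'.le (sub_le_self 1 hp.1.le) hcard) measureReal_nonneg
      _ ≤ _ := pow_card_inter_mul_birthMeasure_real_inter_le ⟨hp.1.le, hp.2.le⟩
          (Finset.disjoint_singleton_left.mpr notMem_rivals_self)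
          (Finset.disjoint_singleton_left.mpr notMem_rivals_self)
          (Finset.disjoint_singleton.mpr hne)

/-- The second moment method is applied to one frame for each potential `k`-simplex. -/
lemma birthMeasure_real_not_exists_isMj_le (hj : 0 < j) (hjk : j < k) (hn : k + 2 ≤ n)
    (hp : p ∈ Set.Ioo (0 : ℝ) 1) :
    (birthMeasure n).real {t | ¬ ∃ K C J, IsMj (complexAt k n t p) k j K C J} ≤
      (((1 - p) ^ ((k + 1) ^ 2 * n ^ (k - j - 1)))⁻¹ - 1) +
        2 * ((j + 2) * (1 - p) ^ (n - (k + 2)).choose (k - j)) +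
        (n.choose (k + 1) * (p * (1 - p) ^ ((k - j + 1) * n.choose (k - j))))⁻¹ := by
  have hpI : p ∈ Set.Icc (0 : ℝ) 1 := ⟨hp.1.le, hp.2.le⟩
  have hp₀ := hp.1
  have hp' : 0 < 1 - p := sub_pos.mpr hp.2
  have : Nonempty (Fin n) := ⟨0, by lia⟩
  choose! C w a hframe using fun (K : Finset (Fin n)) (hK : #K = k + 1) =>
    exists_isStarFrame hjk.le hK (by rwa [Fintype.card_fin])
  let s : Finset (Finset (Fin n)) := Finset.univ.powersetCard (k + 1)
  let E (K : Finset (Fin n)) := birthBox {K} (rivals k K (C K)) p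
  let F (K : Finset (Fin n)) := starEvent k j p K (C K) (w K) (a K)
  replace hframe : ∀ K ∈ s, IsStarFrame k j K (C K) (w K) (a K) := fun K hK =>
    hframe K (Finset.mem_powersetCard.mp hK).2
  have hsub : {t | ¬ ∃ K C J, IsMj (complexAt k n t p) k j K C J} ⊆ (⋃ K ∈ s, F K)ᶜ := by
    refine fun t ht htF => ht ?_
    obtain ⟨K, hK, htK⟩ := Set.mem_iUnion₂.mp htF
    exact ⟨K, C K, _, ((hframe K hK).isMjStar hj (hj.trans hjk) htK).isMj⟩
  have hmean : n.choose (k + 1) * (p * (1 - p) ^ ((k - j + 1) * n.choose (k - j))) ≤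
      ∑ K ∈ s, (birthMeasure n).real (E K) := by
    have hs : #s = n.choose (k + 1) := by
      rw [Finset.card_powersetCard, Finset.card_univ, Fintype.card_fin]
    rw [← hs, ← nsmul_eq_mul]
    exact Finset.card_nsmul_le_sum _ _ _ fun K hK =>
      (hframe K hK).le_birthMeasure_real_birthBox_rivals hjk.le hpI
  have hmean_pos : 0 < n.choose (k + 1) * (p * (1 - p) ^ ((k - j + 1) * n.choose (k - j))) := by
    have := Nat.choose_pos (show k + 1 ≤ n by lia)
    positivity
  refine (measureReal_mono hsub).trans <| (measureReal_compl_biUnion_le (E := E)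
    (fun K _ => measurableSet_starEvent) (fun K _ => Set.sdiff_subset)
    (fun K hK => (hframe K hK).le_birthMeasure_real_starEvent hjk.le hpI)
    (R := ((1 - p) ^ ((k + 1) ^ 2 * n ^ (k - j - 1)))⁻¹) (by positivity) ?_
    (hmean_pos.trans_le hmean)).trans ?_
  · intro K hK K' hK' hne
    exact (hframe K hK).birthMeasure_real_inter_le (hframe K' hK') hne hp
  · gcongr

lemma IsMjMinus.mem_birthBox_union_firstBorn {p₀ : ℝ} (hj : 0 < j) (hk : 0 < k)
    (h : IsMjMinus (complexAt k n t p) k j K C) (hp : p₀ ≤ p) :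
    t ∈ birthBox {K} (rivals k K C) p₀ ∪ firstBorn (insert K (rivals k K C)) p₀ K := by
  obtain ⟨htK, hlate⟩ := ((isMjMinus_complexAt_iff hj hk).mp h).2
  replace htK : t K ≤ p := htK K (by simp)
  rcases le_or_gt (t K) p₀ with hK | hK
  · exact Or.inl ⟨by simpa using hK, fun L hL => hp.trans_lt (hlate L hL)⟩
  · refine Or.inr ⟨hK, fun L hL hne => htK.trans_lt (hlate L ?_)⟩
    exact (Finset.mem_insert.mp hL).resolve_left hne

lemma birthMeasure_real_birthBox_union_firstBorn_le {M : ℕ} (hM : 0 < M)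
    (hrivals : M ≤ #(rivals k K C)) (hp : p ∈ Set.Icc (0 : ℝ) 1) :
    (birthMeasure n).real
        (birthBox {K} (rivals k K C) p ∪ firstBorn (insert K (rivals k K C)) p K) ≤
      (p + (M : ℝ)⁻¹) * (1 - p) ^ M := by
  have hp₀ := hp.1
  have hp' : 0 ≤ 1 - p := sub_nonneg.mpr hp.2
  have hp'' : 1 - p ≤ 1 := sub_le_self 1 hp.1
  have hM' : M ≤ #(insert K (rivals k K C)) :=
    hrivals.trans (Finset.card_le_card (Finset.subset_insert _ _))
  calc _ ≤ _ := measureReal_union_le _ _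
    _ ≤ p * (1 - p) ^ #(rivals k K C) + (1 - p) ^ #(insert K (rivals k K C)) /
          #(insert K (rivals k K C)) := by
        rw [birthMeasure_real_birthBox_rivals hp]
        gcongr
        exact birthMeasure_real_firstBorn_le hp (Finset.mem_insert_self _ _)
    _ ≤ p * (1 - p) ^ M + (1 - p) ^ M / M := by
        gcongr ?_ + ?_
        · exact mul_le_mul_of_nonneg_left (pow_le_pow_of_le_one hp' hp'' hrivals) hp₀
        · gcongr ?_ / ?_
          · exact pow_le_pow_of_le_one hp' hp'' hM'
          · exact_mod_cast hM'
    _ = _ := by ring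

lemma birthMeasure_real_exists_isMj_le {M : ℕ} (hj : 0 < j) (hjk : j < k) (hM : 0 < M)
    (hMn : M ≤ (k - j + 1) * (n - (k + 1)).choose (k - j)) (hp : p ∈ Set.Icc (0 : ℝ) 1) :
    (birthMeasure n).real
        {t | ∃ p' ∈ Set.Icc p 1, ∃ K C J, IsMj (complexAt k n t p') k j K C J} ≤
      n.choose (k + 1) * (k + 1).choose j * ((p + (M : ℝ)⁻¹) * (1 - p) ^ M) := by
  have hk : 0 < k := hj.trans hjk
  let s : Finset (Finset (Fin n)) := Finset.univ.powersetCard (k + 1)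
  let D (K C : Finset (Fin n)) : Set (Finset (Fin n) → ℝ) :=
    birthBox {K} (rivals k K C) p ∪ firstBorn (insert K (rivals k K C)) p K
  have hsub : {t | ∃ p' ∈ Set.Icc p 1, ∃ K C J, IsMj (complexAt k n t p') k j K C J} ⊆
      ⋃ K ∈ s, ⋃ C ∈ K.powersetCard j, D K C := by
    rintro t ⟨p', hp', K, C, J, hMj, -⟩
    obtain ⟨⟨hK, hC, hCK⟩, -⟩ := (isMjMinus_complexAt_iff hj hk).mp hMj
    exact Set.mem_biUnion (Finset.mem_powersetCard.mpr ⟨Finset.subset_univ K, hK⟩)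
      (Set.mem_biUnion (Finset.mem_powersetCard.mpr ⟨hCK, hC⟩)
        (hMj.mem_birthBox_union_firstBorn hj hk hp'.1))
  have hD : ∀ K ∈ s, ∀ C ∈ K.powersetCard j,
      (birthMeasure n).real (D K C) ≤ (p + (M : ℝ)⁻¹) * (1 - p) ^ M := by
    intro K hK C hC
    obtain ⟨hCK, hC⟩ := Finset.mem_powersetCard.mp hC
    have hrivals := le_card_rivals (Finset.mem_powersetCard.mp hK).2 hC hCK hjk
    rw [Fintype.card_fin] at hrivals
    exact birthMeasure_real_birthBox_union_firstBorn_le hM (hMn.trans hrivals) hp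
  have hcentres : ∀ K ∈ s, (birthMeasure n).real (⋃ C ∈ K.powersetCard j, D K C) ≤
      (k + 1).choose j * ((p + (M : ℝ)⁻¹) * (1 - p) ^ M) := by
    intro K hK
    refine (measureReal_biUnion_finset_le _ _).trans
      ((Finset.sum_le_card_nsmul _ _ _ (hD K hK)).trans_eq ?_)
    rw [Finset.card_powersetCard, (Finset.mem_powersetCard.mp hK).2, nsmul_eq_mul]
  calc _ ≤ (birthMeasure n).real (⋃ K ∈ s, ⋃ C ∈ K.powersetCard j, D K C) :=
        measureReal_mono hsub (measure_ne_top _ _)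
    _ ≤ #s • ((k + 1).choose j * ((p + (M : ℝ)⁻¹) * (1 - p) ^ M)) :=
        (measureReal_biUnion_finset_le _ _).trans (Finset.sum_le_card_nsmul _ _ _ hcentres)
    _ = _ := by
        rw [Finset.card_powersetCard, Finset.card_univ, Fintype.card_fin, nsmul_eq_mul, mul_assoc]

end RandomComplex

/-! ### Asymptotics -/

section Asymptotics

open Asymptotics

/-- The asymptotic number of rivals of a `j`-flower in a `k`-simplex on `n` vertices, where
`d = k - j`: there are `d + 1` petals, each with about `n ^ d / d!` further cofaces. -/
noncomputable def flowerScale (d n : ℕ) : ℝ :=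
  (d + 1) * n ^ d / d.factorial

lemma flowerScale_pos {d n : ℕ} (hn : 0 < n) : 0 < flowerScale d n := by
  unfold flowerScale
  positivity

lemma mul_choose_le_flowerScale (d n : ℕ) : (d + 1) * (n.choose d : ℝ) ≤ flowerScale d n := by
  rw [flowerScale, mul_div_assoc]
  gcongr
  exact Nat.choose_le_pow_div d n

lemma one_sub_mul_flowerScale_le {d n : ℕ} (b : ℕ) (hn : b + d ≤ n) (hn₀ : 0 < n) :
    (1 - d * (b + d) / n) * flowerScale d n ≤ (d + 1) * ((n - b).choose d : ℝ) := by
  have hn' : (0 : ℝ) < n := mod_cast hn₀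
  have hbase : (n : ℝ) * (1 - (b + d) / n) ≤ ((n - b + 1 - d : ℕ) : ℝ) := by
    have : (n : ℝ) ≤ ((n - b + 1 - d : ℕ) : ℝ) + (b + d) := by
      norm_cast
      lia
    have heq : (n : ℝ) * (1 - (b + d) / n) = n - (b + d) := by field_simp
    linarith
  have hfrac : (b + d : ℝ) / n ≤ 1 := by
    rw [div_le_one hn']
    exact_mod_cast hn
  have hbernoulli : 1 - d * (b + d) / n ≤ (1 - (b + d) / n : ℝ) ^ d := by
    rw [sub_eq_add_neg _ ((b + d : ℝ) / n)]
    refine le_trans (le_of_eq ?_) (one_add_mul_le_pow (by linarith) d)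
    ring
  calc (1 - d * (b + d) / n) * flowerScale d n
      ≤ (1 - (b + d) / n) ^ d * flowerScale d n :=
        mul_le_mul_of_nonneg_right hbernoulli (flowerScale_pos hn₀).le
    _ = (d + 1) * ((n * (1 - (b + d) / n)) ^ d / d.factorial) := by
        rw [flowerScale, mul_pow]
        ring
    _ ≤ (d + 1) * (((n - b + 1 - d : ℕ) : ℝ) ^ d / d.factorial) := by
        have : 0 ≤ (n : ℝ) * (1 - (b + d) / n) := mul_nonneg hn'.le (sub_nonneg.mpr hfrac)
        gcongr
    _ ≤ (d + 1) * ((n - b).choose d : ℝ) := by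
        gcongr
        exact Nat.pow_le_choose d (n - b)

lemma exp_neg_add_one_le_one_sub_pow {p c : ℝ} {s : ℕ} (hp : p < 1) (hs : s * p ≤ c)
    (hcp : (c + 1) * p ≤ 1) : Real.exp (-(c + 1)) ≤ (1 - p) ^ s := by
  have hp' : 0 < 1 - p := sub_pos.mpr hp
  rw [← Real.le_log_iff_exp_le (pow_pos hp' s), Real.log_pow]
  calc -(c + 1) ≤ -(s * p / (1 - p)) := by
        rw [neg_le_neg_iff, div_le_iff₀ hp']
        linarith
    _ = s * (1 - (1 - p)⁻¹) := by
        field_simp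
        ring
    _ ≤ s * Real.log (1 - p) := by
        gcongr
        exact Real.one_sub_inv_le_log_of_pos hp'

lemma one_sub_pow_le_exp {p : ℝ} (hp : p ≤ 1) (s : ℕ) : (1 - p) ^ s ≤ Real.exp (-(p * s)) := by
  calc (1 - p) ^ s ≤ Real.exp (-p) ^ s :=
        pow_le_pow_left₀ (sub_nonneg.mpr hp) (Real.one_sub_le_exp_neg p) s
    _ = Real.exp (-(p * s)) := by
        rw [← Real.exp_nat_mul, mul_neg, mul_comm]

lemma tendsto_div_flowerScale_mul_pow {d : ℕ} (hd : 0 < d) {f : ℕ → ℝ}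
    (hf : f =o[atTop] fun n : ℕ => (n : ℝ)) :
    Tendsto (fun n => f n / flowerScale d n * n ^ (d - 1)) atTop (𝓝 0) := by
  have hlim := hf.tendsto_div_nhds_zero.const_mul (d.factorial / (d + 1) : ℝ)
  rw [mul_zero] at hlim
  refine hlim.congr' ?_
  filter_upwards [eventually_gt_atTop 0] with n hn
  obtain ⟨e, rfl⟩ := Nat.exists_eq_add_of_lt hd
  simp only [flowerScale, zero_add, Nat.add_sub_cancel, pow_succ]
  field_simp

lemma tendsto_div_flowerScale {d : ℕ} (hd : 0 < d) {f : ℕ → ℝ}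
    (hf : f =o[atTop] fun n : ℕ => (n : ℝ)) :
    Tendsto (fun n => f n / flowerScale d n) atTop (𝓝 0) := by
  refine squeeze_zero_norm' ?_ <|
    tendsto_zero_iff_norm_tendsto_zero.mp (tendsto_div_flowerScale_mul_pow hd hf)
  filter_upwards [eventually_gt_atTop 0] with n hn
  rw [norm_mul, norm_pow, Real.norm_natCast]
  exact le_mul_of_one_le_right (norm_nonneg _) (one_le_pow₀ (mod_cast hn))

variable {c : ℕ → ℝ} (hc : c =Θ[atTop] fun n : ℕ => Real.log n)
include hc

lemma isLittleO_pow_natCast (m : ℕ) : (fun n => c n ^ m) =o[atTop] fun n : ℕ => (n : ℝ) :=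
  (hc.1.pow m).trans_isLittleO <|
    (Real.isLittleO_pow_log_id_atTop (n := m)).comp_tendsto tendsto_natCast_atTop_atTop

lemma isLittleO_natCast : c =o[atTop] fun n : ℕ => (n : ℝ) := by
  simpa using isLittleO_pow_natCast hc 1

/-- The exact constant hidden in the number of rivals does not matter, only its leading term. -/
lemma eventually_sub_one_le_mul_choose {d : ℕ} (hctop : Tendsto c atTop atTop) (b : ℕ) :
    ∀ᶠ n in atTop, c n - 1 ≤ c n / flowerScale d n * ((d + 1) * ((n - b).choose d : ℝ)) := by
  have hsmall : Tendsto (fun n => d * (b + d) * (c n / n)) atTop (𝓝 0) := by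
    simpa using (isLittleO_natCast hc).tendsto_div_nhds_zero.const_mul (d * (b + d) : ℝ)
  filter_upwards [hsmall.eventually_le_const one_pos, hctop.eventually_ge_atTop 0,
    eventually_ge_atTop (b + d), eventually_gt_atTop 0] with n hn hc₀ hbd hn₀
  have hN := flowerScale_pos (d := d) hn₀
  calc c n - 1 ≤ c n - d * (b + d) * (c n / n) := by linarith
    _ = c n / flowerScale d n * ((1 - d * (b + d) / n) * flowerScale d n) := by
        field_simp
    _ ≤ _ := mul_le_mul_of_nonneg_left (one_sub_mul_flowerScale_le b hbd hn₀)
        (div_nonneg hc₀ hN.le)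

lemma eventually_div_flowerScale_mem_Ioo {d : ℕ} (hd : 0 < d) (hctop : Tendsto c atTop atTop) :
    ∀ᶠ n in atTop, c n / flowerScale d n ∈ Set.Ioo 0 1 := by
  filter_upwards [(tendsto_div_flowerScale hd (isLittleO_natCast hc)).eventually_lt_const one_pos,
    hctop.eventually_gt_atTop 0, eventually_gt_atTop 0] with n hlt hpos hn
  exact ⟨div_pos hpos (flowerScale_pos hn), hlt⟩

lemma tendsto_one_sub_pow_mul_pow {d : ℕ} (hd : 0 < d) (hctop : Tendsto c atTop atTop) (a : ℕ) :
    Tendsto (fun n => (1 - c n / flowerScale d n) ^ (a * n ^ (d - 1))) atTop (𝓝 1) := by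
  have hlower : Tendsto (fun n => 1 - a * (c n / flowerScale d n * n ^ (d - 1))) atTop (𝓝 1) := by
    simpa using ((tendsto_div_flowerScale_mul_pow hd
      (isLittleO_natCast hc)).const_mul (a : ℝ)).const_sub 1
  refine tendsto_of_tendsto_of_tendsto_of_le_of_le' hlower tendsto_const_nhds ?_ ?_
  all_goals filter_upwards [eventually_div_flowerScale_mem_Ioo hc hd hctop] with n ⟨hp₀, hp₁⟩
  · rw [sub_eq_add_neg _ (c n / _)]
    refine le_trans (le_of_eq ?_) (one_add_mul_le_pow (by linarith) (a * n ^ (d - 1)))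
    push_cast
    ring
  · exact pow_le_one₀ (sub_nonneg.mpr hp₁.le) (sub_le_self 1 hp₀.le)

lemma tendsto_one_sub_pow_choose {d : ℕ} (hd : 0 < d) (hctop : Tendsto c atTop atTop) (b : ℕ) :
    Tendsto (fun n => (1 - c n / flowerScale d n) ^ (n - b).choose d) atTop (𝓝 0) := by
  have hexponent : Tendsto (fun n => -((c n - 1) / (d + 1))) atTop atBot :=
    tendsto_neg_atTop_atBot.comp <|
      (tendsto_atTop_add_const_right _ (-1) hctop).atTop_div_const (by positivity)
  refine tendsto_of_tendsto_of_tendsto_of_le_of_le' tendsto_const_nhds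
    (Real.tendsto_exp_atBot.comp hexponent) ?_ ?_
  all_goals filter_upwards [eventually_div_flowerScale_mem_Ioo hc hd hctop,
    eventually_sub_one_le_mul_choose hc hctop b (d := d)] with n ⟨_, hp₁⟩ hexp
  · exact pow_nonneg (sub_nonneg.mpr hp₁.le) _
  · refine (one_sub_pow_le_exp hp₁.le _).trans (Real.exp_le_exp.mpr (neg_le_neg ?_))
    rw [div_le_iff₀ (by positivity)]
    linarith

lemma isBigO_one_sub_pow_mul_choose {d : ℕ} (hd : 0 < d) (hctop : Tendsto c atTop atTop) (b : ℕ) :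
    (fun n => (1 - c n / flowerScale d n) ^ ((d + 1) * (n - b).choose d)) =O[atTop]
      fun n => Real.exp (-c n) := by
  refine IsBigO.of_bound (Real.exp 1) ?_
  filter_upwards [eventually_div_flowerScale_mem_Ioo hc hd hctop,
    eventually_sub_one_le_mul_choose hc hctop b (d := d)] with n ⟨_, hp₁⟩ hexp
  rw [Real.norm_of_nonneg (pow_nonneg (sub_nonneg.mpr hp₁.le) _), Real.norm_of_nonneg
    (Real.exp_pos _).le, ← Real.exp_add]
  refine (one_sub_pow_le_exp hp₁.le _).trans (Real.exp_le_exp.mpr ?_)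
  push_cast
  linarith

lemma isBigO_exp_neg_one_sub_pow {d : ℕ} (hd : 0 < d) (hctop : Tendsto c atTop atTop) :
    (fun n => Real.exp (-c n)) =O[atTop]
      fun n => (1 - c n / flowerScale d n) ^ ((d + 1) * n.choose d) := by
  have hsmall : Tendsto (fun n => (c n ^ 2 + c n) / flowerScale d n) atTop (𝓝 0) :=
    tendsto_div_flowerScale hd ((isLittleO_pow_natCast hc 2).add (isLittleO_natCast hc))
  refine IsBigO.of_bound (Real.exp 1) ?_
  filter_upwards [eventually_div_flowerScale_mem_Ioo hc hd hctop,
    hsmall.eventually_le_const one_pos, eventually_gt_atTop 0] with n ⟨hp₀, hp₁⟩ hcp hn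
  have hlower : Real.exp (-(c n + 1)) ≤
      (1 - c n / flowerScale d n) ^ ((d + 1) * n.choose d) := by
    refine exp_neg_add_one_le_one_sub_pow hp₁ ?_ ?_
    · push_cast
      calc _ ≤ flowerScale d n * (c n / flowerScale d n) :=
            mul_le_mul_of_nonneg_right (mul_choose_le_flowerScale d n) hp₀.le
        _ = c n := mul_div_cancel₀ _ (flowerScale_pos hn).ne'
    · calc _ = (c n ^ 2 + c n) / flowerScale d n := by ring
        _ ≤ 1 := hcp
  rw [Real.norm_of_nonneg (pow_nonneg (sub_nonneg.mpr hp₁.le) _), Real.norm_of_nonneg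
    (Real.exp_pos _).le]
  calc Real.exp (-c n) = Real.exp 1 * Real.exp (-(c n + 1)) := by
        rw [← Real.exp_add]
        ring_nf
    _ ≤ _ := by gcongr

lemma isTheta_choose_mul_div_flowerScale {r d : ℕ} (hdr : d ≤ r) :
    (fun n => n.choose r * (c n / flowerScale d n)) =Θ[atTop]
      fun n : ℕ => (n : ℝ) ^ (r - d) * Real.log n := by
  have hscale : flowerScale d =Θ[atTop] fun n : ℕ => (n : ℝ) ^ d := by
    have heq : flowerScale d = fun n : ℕ => ((d + 1) / d.factorial : ℝ) * (n : ℝ) ^ d := by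
      funext n
      rw [flowerScale]
      ring
    exact heq ▸ (isTheta_refl _ _).const_mul_left (by positivity)
  refine ((isTheta_choose r).mul (hc.div hscale)).trans_eventuallyEq ?_
  filter_upwards [eventually_gt_atTop 0] with n hn
  rw [pow_sub₀ _ (by positivity) hdr]
  ring

end Asymptotics

/-! ### The threshold -/

section Threshold

open Asymptotics

/-- The expected number of rivals of a flower at the time which deviates by `x` from the critical
one: at that time about `exp (-x)` copies of `M_j^-` are expected, up to a constant factor. -/
noncomputable def birthLevel (j n : ℕ) (x : ℝ) : ℝ :=
  (j + 1) * Real.log n + Real.log (Real.log n) + x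

/-- The time at which a flower is expected to have `birthLevel j n x` rivals. -/
noncomputable def birthTime (k j n : ℕ) (x : ℝ) : ℝ :=
  birthLevel j n x / flowerScale (k - j) n

lemma birthTime_eq (k j n : ℕ) (x : ℝ) :
    birthTime k j n x = ((j + 1 : ℝ) * Real.log n + Real.log (Real.log n) + x) *
      (k - j).factorial / (((k - j + 1 : ℕ) : ℝ) * (n : ℝ) ^ (k - j)) := by
  rw [birthTime, birthLevel, flowerScale]
  push_cast
  field_simp

lemma birthTime_strictMono {k j n : ℕ} (hn : 0 < n) : StrictMono (birthTime k j n) := by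
  intro x y hxy
  have := flowerScale_pos (d := k - j) hn
  unfold birthTime birthLevel
  gcongr

lemma tendsto_log_natCast_atTop : Tendsto (fun n : ℕ => Real.log n) atTop atTop :=
  Real.tendsto_log_atTop.comp tendsto_natCast_atTop_atTop

lemma isLittleO_log_log : (fun n : ℕ => Real.log (Real.log n)) =o[atTop] fun n : ℕ => Real.log n :=
  Real.isLittleO_log_id_atTop.comp_tendsto tendsto_log_natCast_atTop

variable {k j : ℕ} {x : ℕ → ℝ}

lemma pow_mul_log_mul_exp_neg_birthLevel {n : ℕ} (hn : 1 < n) (y : ℝ) :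
    (n : ℝ) ^ (j + 1) * Real.log n * Real.exp (-birthLevel j n y) = Real.exp (-y) := by
  have hn₀ : (0 : ℝ) < n := by positivity
  have hlog : 0 < Real.log n := Real.log_pos (mod_cast hn)
  have hpow : Real.exp ((j + 1) * Real.log n) = (n : ℝ) ^ (j + 1) := by
    rw [← Nat.cast_add_one, Real.exp_nat_mul, Real.exp_log hn₀]
  rw [birthLevel, neg_add, neg_add, Real.exp_add, Real.exp_add, Real.exp_neg, Real.exp_neg, hpow,
    Real.exp_log hlog]
  field_simp

lemma birthLevel_isEquivalent (hx : x =o[atTop] fun n : ℕ => Real.log n) :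
    (fun n => birthLevel j n (x n)) ~[atTop] fun n => (j + 1) * Real.log n := by
  have hsmall : (fun n : ℕ => Real.log (Real.log n) + x n) =o[atTop]
      fun n : ℕ => ((j : ℝ) + 1) * Real.log n :=
    (isLittleO_log_log.add hx).const_mul_right (by positivity)
  refine hsmall.congr_left fun n => ?_
  simp only [birthLevel, Pi.sub_apply]
  ring

lemma birthLevel_isTheta (hx : x =o[atTop] fun n : ℕ => Real.log n) :
    (fun n => birthLevel j n (x n)) =Θ[atTop] fun n : ℕ => Real.log n :=
  (birthLevel_isEquivalent hx).isTheta.trans ((isTheta_refl _ _).const_mul_left (by positivity))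

lemma tendsto_birthLevel_atTop (hx : x =o[atTop] fun n : ℕ => Real.log n) :
    Tendsto (fun n => birthLevel j n (x n)) atTop atTop :=
  (birthLevel_isEquivalent hx).symm.tendsto_atTop <|
    tendsto_log_natCast_atTop.const_mul_atTop (by positivity)

lemma eventually_birthTime_mem_Ioo (hjk : j < k) (hx : x =o[atTop] fun n : ℕ => Real.log n) :
    ∀ᶠ n in atTop, birthTime k j n (x n) ∈ Set.Ioo 0 1 :=
  eventually_div_flowerScale_mem_Ioo (birthLevel_isTheta hx) (Nat.sub_pos_of_lt hjk)
    (tendsto_birthLevel_atTop hx)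

lemma isTheta_choose_mul_birthTime (hjk : j < k) (hx : x =o[atTop] fun n : ℕ => Real.log n) :
    (fun n => n.choose (k + 1) * birthTime k j n (x n)) =Θ[atTop]
      fun n : ℕ => (n : ℝ) ^ (j + 1) * Real.log n := by
  have := isTheta_choose_mul_div_flowerScale (birthLevel_isTheta (j := j) hx)
    (show k - j ≤ k + 1 by lia)
  rwa [show k + 1 - (k - j) = j + 1 by lia] at this

/-- The inverted quantity bounds the expected number of copies of `M_j^-` from below. -/
lemma tendsto_inv_choose_mul_birthTime_mul_pow (hjk : j < k)
    (hx : x =o[atTop] fun n : ℕ => Real.log n) (hxbot : Tendsto x atTop atBot) :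
    Tendsto (fun n => (n.choose (k + 1) * (birthTime k j n (x n) *
      (1 - birthTime k j n (x n)) ^ ((k - j + 1) * n.choose (k - j))))⁻¹) atTop (𝓝 0) := by
  have hO : (fun n => Real.exp (-x n)) =O[atTop] fun n => n.choose (k + 1) *
      (birthTime k j n (x n) *
        (1 - birthTime k j n (x n)) ^ ((k - j + 1) * n.choose (k - j))) := by
    refine ((isTheta_choose_mul_birthTime hjk hx).2.mul (isBigO_exp_neg_one_sub_pow
      (birthLevel_isTheta hx) (Nat.sub_pos_of_lt hjk) (tendsto_birthLevel_atTop hx))).congr'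
      ?_ (Eventually.of_forall fun n => mul_assoc _ _ _)
    filter_upwards [eventually_gt_atTop 1] with n hn
    exact pow_mul_log_mul_exp_neg_birthLevel hn (x n)
  refine (hO.inv_rev (Eventually.of_forall fun n h => absurd h (Real.exp_pos _).ne')).trans_tendsto
    ?_
  simpa only [← Real.exp_neg, neg_neg, Function.comp_def] using Real.tendsto_exp_atBot.comp hxbot

lemma tendsto_birthMeasure_not_exists_isMj (hj : 0 < j) (hjk : j < k)
    (hx : x =o[atTop] fun n : ℕ => Real.log n) (hxbot : Tendsto x atTop atBot) :
    Tendsto (fun n => (birthMeasure n).real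
      {t | ¬ ∃ K C J, IsMj (complexAt k n t (birthTime k j n (x n))) k j K C J}) atTop (𝓝 0) := by
  have hd : 0 < k - j := Nat.sub_pos_of_lt hjk
  have hΘ := birthLevel_isTheta (j := j) hx
  have htop := tendsto_birthLevel_atTop (j := j) hx
  have hcorrelation := ((tendsto_one_sub_pow_mul_pow hΘ hd htop ((k + 1) ^ 2)).inv₀
    one_ne_zero).sub_const 1
  have hshell := ((tendsto_one_sub_pow_choose hΘ hd htop (k + 2)).const_mul
    (j + 2 : ℝ)).const_mul 2
  have hmean := tendsto_inv_choose_mul_birthTime_mul_pow hjk hx hxbot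
  have hbound := (hcorrelation.add hshell).add hmean
  simp only [inv_one, sub_self, mul_zero, add_zero] at hbound
  refine squeeze_zero' (Eventually.of_forall fun n => measureReal_nonneg) ?_ hbound
  filter_upwards [eventually_birthTime_mem_Ioo hjk hx, eventually_ge_atTop (k + 2)] with n hp hn
  exact birthMeasure_real_not_exists_isMj_le hj hjk hn hp

lemma tendsto_birthMeasure_exists_isMj (hj : 0 < j) (hjk : j < k)
    (hx : x =o[atTop] fun n : ℕ => Real.log n) (hxtop : Tendsto x atTop atTop) :
    Tendsto (fun n => (birthMeasure n).real
      {t | ∃ p ∈ Set.Icc (birthTime k j n (x n)) 1, ∃ K C J,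
        IsMj (complexAt k n t p) k j K C J}) atTop (𝓝 0) := by
  have hΘ := birthLevel_isTheta (j := j) hx
  have htop := tendsto_birthLevel_atTop (j := j) hx
  have hlate := isBigO_one_sub_pow_mul_choose hΘ (Nat.sub_pos_of_lt hjk) htop (k + 1)
  have hbound : Tendsto (fun n => 2 * (k + 1).choose j *
      (n.choose (k + 1) * birthTime k j n (x n) *
        (1 - birthTime k j n (x n)) ^ ((k - j + 1) * (n - (k + 1)).choose (k - j))))
      atTop (𝓝 0) := by
    rw [← mul_zero (2 * (k + 1).choose j : ℝ)]
    refine Tendsto.const_mul _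
      (((isTheta_choose_mul_birthTime hjk hx).1.mul hlate).trans_tendsto ?_)
    refine (Real.tendsto_exp_neg_atTop_nhds_zero.comp hxtop).congr' ?_
    filter_upwards [eventually_gt_atTop 1] with n hn
    exact (pow_mul_log_mul_exp_neg_birthLevel hn (x n)).symm
  refine squeeze_zero' (Eventually.of_forall fun n => measureReal_nonneg) ?_ hbound
  filter_upwards [eventually_birthTime_mem_Ioo hjk hx, htop.eventually_ge_atTop 2,
    eventually_sub_one_le_mul_choose hΘ htop (d := k - j) (k + 1)] with n hp hlevel hcount
  set p := birthTime k j n (x n)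
  set M := (k - j + 1) * (n - (k + 1)).choose (k - j) with hM
  have hpM : 1 ≤ p * M := by
    have : birthLevel j n (x n) - 1 ≤ p * M := by
      rw [hM]
      push_cast
      exact hcount
    linarith
  have hMpos : 0 < M := by
    by_contra! h
    norm_num [Nat.le_zero.mp h] at hpM
  have hinv : (M : ℝ)⁻¹ ≤ p := (inv_le_iff_one_le_mul₀ (by positivity)).mpr hpM
  have hpow : 0 ≤ (1 - p) ^ M := pow_nonneg (sub_nonneg.mpr hp.2.le) M
  refine (birthMeasure_real_exists_isMj_le hj hjk hMpos le_rfl ⟨hp.1.le, hp.2.le⟩).trans ?_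
  calc _ ≤ n.choose (k + 1) * (k + 1).choose j * ((p + p) * (1 - p) ^ M) := by gcongr
    _ = _ := by ring

variable {ω : ℕ → ℝ}

/-- The asymptotics above need a deviation of smaller order than `log n`, so that `ω` is replaced
by a slower function. -/
lemma exists_isLittleO_log_eventually_lt (hω : Tendsto ω atTop atTop) :
    ∃ x : ℕ → ℝ, Tendsto x atTop atTop ∧ x =o[atTop] (fun n : ℕ => Real.log n) ∧
      ∀ᶠ n in atTop, x n < ω n := by
  have hloglog : Tendsto (fun n : ℕ => Real.log (Real.log n)) atTop atTop :=
    Real.tendsto_log_atTop.comp tendsto_log_natCast_atTop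
  have hmin : Tendsto (fun n => min (ω n / 2) (Real.log (Real.log n))) atTop atTop := by
    refine tendsto_atTop.mpr fun b => ?_
    filter_upwards [(hω.atTop_div_const two_pos).eventually_ge_atTop b,
      hloglog.eventually_ge_atTop b] with n hn hn'
    exact le_min hn hn'
  refine ⟨_, hmin, IsBigO.trans_isLittleO (IsBigO.of_bound' ?_) isLittleO_log_log, ?_⟩
  · filter_upwards [hmin.eventually_ge_atTop 0] with n hn
    exact norm_le_norm_of_abs_le_abs (abs_le_abs_of_nonneg hn (min_le_right _ _))
  · filter_upwards [hω.eventually_gt_atTop 0] with n hn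
    exact (min_le_left _ _).trans_lt (half_lt_self hn)

lemma tendsto_birthMeasure_birthTime_lt_pMj_compl (hj : 0 < j) (hjk : j < k)
    (hω : Tendsto ω atTop atTop) :
    Tendsto (fun n => (birthMeasure n).real {t | birthTime k j n (-ω n) < pMj k j n t}ᶜ)
      atTop (𝓝 0) := by
  obtain ⟨x, hxtop, hx, hxω⟩ := exists_isLittleO_log_eventually_lt hω
  refine squeeze_zero' (Eventually.of_forall fun n => measureReal_nonneg) ?_
    (tendsto_birthMeasure_not_exists_isMj hj hjk hx.neg_left (tendsto_neg_atTop_atBot.comp hxtop))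
  filter_upwards [eventually_birthTime_mem_Ioo hjk hx.neg_left, hxω, eventually_gt_atTop 0]
    with n hp hlt hn
  refine measureReal_mono fun t ht hMj => ht ?_
  calc birthTime k j n (-ω n) < birthTime k j n (-x n) :=
        birthTime_strictMono hn (neg_lt_neg hlt)
    _ ≤ pMj k j n t := le_csSup ⟨1, fun p hp => hp.1.2⟩ ⟨⟨hp.1.le, hp.2.le⟩, hMj⟩

lemma tendsto_birthMeasure_pMj_lt_birthTime_compl (hj : 0 < j) (hjk : j < k)
    (hω : Tendsto ω atTop atTop) :
    Tendsto (fun n => (birthMeasure n).real {t | pMj k j n t < birthTime k j n (ω n)}ᶜ)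
      atTop (𝓝 0) := by
  obtain ⟨x, hxtop, hx, hxω⟩ := exists_isLittleO_log_eventually_lt hω
  refine squeeze_zero' (Eventually.of_forall fun n => measureReal_nonneg) ?_
    (tendsto_birthMeasure_exists_isMj hj hjk hx hxtop)
  filter_upwards [eventually_birthTime_mem_Ioo hjk hx, hxω, eventually_gt_atTop 0]
    with n hp hlt hn
  refine measureReal_mono fun t ht => ?_
  by_contra hMj
  refine ht (lt_of_le_of_lt ?_ (birthTime_strictMono hn hlt))
  refine Real.sSup_le (fun p ⟨hpI, hp'⟩ => ?_) hp.1.le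
  by_contra! hlate
  exact hMj ⟨p, ⟨hlate.le, hpI.2⟩, hp'⟩

end Threshold

/-- Theorem 1.5(i): whp `p_{M_j}` lies between
`((j+1)·log n + log log n ∓ ω)·(k-j)!/((k-j+1)·n^{k-j})`. -/
theorem statement0 (k j : ℕ) (hk : 2 ≤ k) (hj : 1 ≤ j) (hjk : j < k)
    (ω : ℕ → ℝ) (hω : Tendsto ω atTop atTop) :
    Tendsto (fun n : ℕ => birthMeasure n {t : Finset (Fin n) → ℝ |
      ((j + 1 : ℝ) * Real.log n + Real.log (Real.log n) - ω n) * (Nat.factorial (k - j)) /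
          (((k - j + 1 : ℕ) : ℝ) * (n : ℝ) ^ (k - j)) < pMj k j n t ∧
        pMj k j n t <
          ((j + 1 : ℝ) * Real.log n + Real.log (Real.log n) + ω n) * (Nat.factorial (k - j)) /
            (((k - j + 1 : ℕ) : ℝ) * (n : ℝ) ^ (k - j))})
      atTop (nhds 1) := by
  have hlower := tendsto_birthMeasure_birthTime_lt_pMj_compl hj hjk hω
  have hupper := tendsto_birthMeasure_pMj_lt_birthTime_compl hj hjk hω
  simpa only [birthTime_eq, ← sub_eq_add_neg, Set.ofPred_and] using
    tendsto_measure_inter_one hlower hupper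

end RSC
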